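/- arXiv:0809.0813 — 2 statements merged into one kernel-verified Lean document; each statement's English description precedes it below -/
import Mathlib

section
/- Every finite-dimensional normed space (E, ‖·‖) with dim E = n admits a Euclidean norm ‖·‖₊ (induced by an inner product) such that ‖x‖² ≤ ‖x‖₊² ≤ n·‖x‖² for all x ∈ E. -/
open scoped RealInnerProductSpace

/-- The parameters of a linear map that shrinks a hyperplane by the factor `b`, stretches its
orthogonal complement by `b * (1 + δ)`, and increases volume in dimension `n`. -/
lemma exists_volume_increasing_stretch {n : ℕ} (hn : 0 < n) {ρ : ℝ} (hρ : (n : ℝ) < ρ) :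
    ∃ b δ : ℝ, 0 ≤ δ ∧ b ^ 2 * (1 + (2 * δ + δ ^ 2) / ρ) ≤ 1 ∧ 1 < b ^ n * (1 + δ) := by
  have hn' : (0 : ℝ) < n := by exact_mod_cast hn
  have hρ0 : 0 < ρ := hn'.trans hρ
  obtain ⟨η, hη, hηn⟩ : ∃ η : ℝ, 0 < η ∧ n * η = ρ - n :=
    ⟨(ρ - n) / n, div_pos (by linarith) hn', by field_simp⟩
  have hδ : Real.sqrt (1 + η) ^ 2 = 1 + η := Real.sq_sqrt (by linarith)
  have hb : Real.sqrt (ρ / (ρ + η)) ^ 2 = ρ / (ρ + η) := Real.sq_sqrt (by positivity)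
  refine ⟨Real.sqrt (ρ / (ρ + η)), Real.sqrt (1 + η) - 1, ?_, ?_, ?_⟩
  · rw [sub_nonneg, Real.one_le_sqrt]
    linarith
  · have : 2 * (Real.sqrt (1 + η) - 1) + (Real.sqrt (1 + η) - 1) ^ 2 = η := by nlinarith
    rw [this, hb]
    apply le_of_eq
    field_simp
  · have hbern : 1 + n * (-(η / (ρ + η))) ≤ (1 + -(η / (ρ + η))) ^ n := by
      apply one_add_mul_le_pow
      have : η / (ρ + η) ≤ 1 := by rw [div_le_one (by positivity)]; linarith
      linarith
    have hbase : 1 + -(η / (ρ + η)) = ρ / (ρ + η) := by field_simp; ring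
    have hlow : 1 < (1 + n * (-(η / (ρ + η)))) * (1 + η) := by
      have : (1 + n * (-(η / (ρ + η)))) * (1 + η) = 1 + η ^ 2 / (ρ + η) := by
        field_simp
        linear_combination (-η) * hηn
      rw [this]
      have : 0 < η ^ 2 / (ρ + η) := by positivity
      linarith
    rw [hbase] at hbern
    have hsq : 1 < (Real.sqrt (ρ / (ρ + η)) ^ n * (1 + (Real.sqrt (1 + η) - 1))) ^ 2 := by
      rw [add_sub_cancel, mul_pow, hδ, ← pow_mul, mul_comm n 2, pow_mul, hb]
      exact hlow.trans_le (mul_le_mul_of_nonneg_right hbern (by linarith))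
    rw [add_sub_cancel] at hsq ⊢
    exact (one_lt_sq_iff₀ (by positivity)).1 hsq

section

variable {E F : Type*} [NormedAddCommGroup E] [NormedSpace ℝ E]
  [NormedAddCommGroup F] [InnerProductSpace ℝ F]

/-- A contraction remains a contraction after a suitable stretch in the direction `v`. -/
lemma norm_apply_stretch_le [CompleteSpace F] {T : F →L[ℝ] E} (hT : ‖T‖ ≤ 1) {v : F} {b k : ℝ}
    (hk : 0 ≤ k)
    (hbk : b ^ 2 * (1 + (2 * k + k ^ 2 * ‖v‖ ^ 2) * ‖T v‖ ^ 2) ≤ 1) (u : F) :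
    ‖T (b • (u + (k * ⟪v, u⟫) • v))‖ ≤ ‖u‖ := by
  obtain ⟨g, hg, hgu⟩ := exists_dual_vector'' ℝ (T (b • (u + (k * ⟪v, u⟫) • v)))
  set z : F := (InnerProductSpace.toDual ℝ F).symm (g.comp T)
  have hz (w : F) : ⟪z, w⟫ = g (T w) := InnerProductSpace.toDual_symm_apply
  have hz1 : ‖z‖ ≤ 1 := by
    rw [LinearIsometryEquiv.norm_map]
    exact (g.opNorm_comp_le T).trans (mul_le_one₀ hg (norm_nonneg _) hT)
  have hzv : ⟪z, v⟫ ^ 2 ≤ ‖T v‖ ^ 2 := by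
    rw [hz, sq_le_sq, abs_norm, ← Real.norm_eq_abs]
    simpa using g.le_of_opNorm_le hg (T v)
  have hadj : ‖T (b • (u + (k * ⟪v, u⟫) • v))‖ = ⟪b • (z + (k * ⟪z, v⟫) • v), u⟫ := by
    have h := hz (b • (u + (k * ⟪v, u⟫) • v))
    rw [hgu] at h
    simp only [RCLike.ofReal_real_eq_id, id] at h
    rw [← h]
    simp only [real_inner_smul_left, real_inner_smul_right, inner_add_left, inner_add_right]
    ring
  have hnorm : ‖b • (z + (k * ⟪z, v⟫) • v)‖ ≤ 1 := by
    rw [← sq_le_one_iff₀ (norm_nonneg _), norm_smul, mul_pow, norm_add_sq_real,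
      real_inner_smul_right, norm_smul, Real.norm_eq_abs, Real.norm_eq_abs, mul_pow, sq_abs, sq_abs]
    refine le_trans (mul_le_mul_of_nonneg_left ?_ (sq_nonneg b)) hbk
    have h1 : ‖z‖ ^ 2 ≤ 1 := pow_le_one₀ (norm_nonneg _) hz1
    have h2 := mul_le_mul_of_nonneg_left hzv (by positivity : 0 ≤ 2 * k + k ^ 2 * ‖v‖ ^ 2)
    linarith
  calc _ = _ := hadj
    _ ≤ ‖b • (z + (k * ⟪z, v⟫) • v)‖ * ‖u‖ := real_inner_le_norm _ _
    _ ≤ ‖u‖ := mul_le_of_le_one_left (norm_nonneg _) hnorm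

/-- Among the contractions `F → E` there is one of maximal volume, and it is nondegenerate. -/
lemma exists_contraction_max_det [FiniteDimensional ℝ E] [FiniteDimensional ℝ F]
    (e : E ≃L[ℝ] F) :
    ∃ T : F →L[ℝ] E, ‖T‖ ≤ 1 ∧ ((e : E →L[ℝ] F).comp T).det ≠ 0 ∧
      ∀ T' : F →L[ℝ] E, ‖T'‖ ≤ 1 →
        |((e : E →L[ℝ] F).comp T').det| ≤ |((e : E →L[ℝ] F).comp T).det| := by
  have hcont : Continuous fun T : F →L[ℝ] E => |((e : E →L[ℝ] F).comp T).det| :=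
    (ContinuousLinearMap.continuous_det.comp
      (ContinuousLinearMap.compL ℝ F E F (e : E →L[ℝ] F)).continuous).abs
  have : ProperSpace (F →L[ℝ] E) := FiniteDimensional.proper ℝ _
  obtain ⟨T, hT, hmax⟩ := (isCompact_closedBall (0 : F →L[ℝ] E) 1).exists_isMaxOn
    ⟨0, by simp⟩ hcont.continuousOn
  have hmax' (T' : F →L[ℝ] E) (hT' : ‖T'‖ ≤ 1) :
      |((e : E →L[ℝ] F).comp T').det| ≤ |((e : E →L[ℝ] F).comp T).det| :=
    hmax (by simpa using hT')
  refine ⟨T, by simpa using hT, ?_, hmax'⟩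
  set c : ℝ := (‖(e.symm : F →L[ℝ] E)‖ + 1)⁻¹
  have hc : 0 < c := by positivity
  have hle := hmax' (c • (e.symm : F →L[ℝ] E)) (by
    rw [norm_smul, Real.norm_of_nonneg hc.le, inv_mul_le_one₀ (by positivity)]
    linarith)
  have hdet : ((e : E →L[ℝ] F).comp (c • (e.symm : F →L[ℝ] E))).det
      = c ^ Module.finrank ℝ F := by
    rw [ContinuousLinearMap.comp_smul, ContinuousLinearEquiv.coe_comp_coe_symm]
    simp [ContinuousLinearMap.det]
  rw [hdet] at hle
  exact abs_pos.1 ((abs_pos.2 (pow_pos hc _).ne').trans_le hle)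

/-- The image of the unit ball under a contraction of maximal volume is large. -/
lemma norm_sq_le_of_max_det [FiniteDimensional ℝ F] (e : E ≃L[ℝ] F) {T : F →L[ℝ] E}
    (hT : ‖T‖ ≤ 1) (hdet : ((e : E →L[ℝ] F).comp T).det ≠ 0)
    (hmax : ∀ T' : F →L[ℝ] E, ‖T'‖ ≤ 1 →
      |((e : E →L[ℝ] F).comp T').det| ≤ |((e : E →L[ℝ] F).comp T).det|) (v : F) :
    ‖v‖ ^ 2 ≤ Module.finrank ℝ F * ‖T v‖ ^ 2 := by
  by_contra! hlt
  have hv : v ≠ 0 := by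
    rintro rfl
    simp at hlt
  have hv0 : 0 < ‖v‖ := norm_pos_iff.2 hv
  have hinj : Function.Injective ((e : E →L[ℝ] F).comp T) :=
    (LinearMap.equivOfDetNeZero _ hdet).injective
  have hTv : 0 < ‖T v‖ := by
    refine norm_pos_iff.2 fun h => hv (hinj ?_)
    simp [h]
  have hn : 0 < Module.finrank ℝ F := Module.finrank_pos_iff_exists_ne_zero.2 ⟨v, hv⟩
  obtain ⟨b, δ, hδ, hbδ, hvol⟩ := exists_volume_increasing_stretch hn
    ((lt_div_iff₀ (by positivity)).2 hlt)
  set k : ℝ := δ / ‖v‖ ^ 2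
  have hk : 0 ≤ k := by positivity
  have hbk : b ^ 2 * (1 + (2 * k + k ^ 2 * ‖v‖ ^ 2) * ‖T v‖ ^ 2) ≤ 1 := by
    convert hbδ using 3
    simp only [k]
    field_simp
  set M : F →ₗ[ℝ] F := b • LinearMap.transvection (k • innerₗ F v) v
  have hM (u : F) : M u = b • (u + (k * ⟪v, u⟫) • v) := rfl
  have hMdet : LinearMap.det M = b ^ Module.finrank ℝ F * (1 + δ) := by
    rw [LinearMap.det_smul, LinearMap.transvection.det]
    simp [k, hv0.ne']
  have hle := hmax (T.comp (LinearMap.toContinuousLinearMap M))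
    (ContinuousLinearMap.opNorm_le_bound _ zero_le_one fun u => by
      simpa [hM] using norm_apply_stretch_le hT hk hbk u)
  have hcomp : ((e : E →L[ℝ] F).comp (T.comp (LinearMap.toContinuousLinearMap M))).det
      = ((e : E →L[ℝ] F).comp T).det * LinearMap.det M :=
    LinearMap.det_comp ((e : E →L[ℝ] F).comp T : F →ₗ[ℝ] F) M
  rw [hcomp, abs_mul, hMdet] at hle
  have := (lt_mul_iff_one_lt_right (abs_pos.2 hdet)).2 (hvol.trans_le (le_abs_self _))
  linarith

end

theorem john_ellipsoid_norm {E : Type*} [NormedAddCommGroup E] [NormedSpace ℝ E]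
    [FiniteDimensional ℝ E] :
    ∃ B : E →ₗ[ℝ] E →ₗ[ℝ] ℝ, (∀ x y : E, B x y = B y x) ∧
      ∀ x : E, ‖x‖ ^ 2 ≤ B x x ∧ B x x ≤ (Module.finrank ℝ E : ℝ) * ‖x‖ ^ 2 := by
  let e : E ≃L[ℝ] EuclideanSpace ℝ (Fin (Module.finrank ℝ E)) :=
    ContinuousLinearEquiv.ofFinrankEq (by simp)
  obtain ⟨T, hT, hdet, hmax⟩ := exists_contraction_max_det e
  let A := LinearMap.equivOfDetNeZero ((e : E →L[ℝ] _).comp T).toLinearMap hdet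
  let S : E →ₗ[ℝ] EuclideanSpace ℝ (Fin (Module.finrank ℝ E)) :=
    A.symm.toLinearMap ∘ₗ e.toLinearEquiv.toLinearMap
  have hTS (x : E) : T (S x) = x := e.injective (A.apply_symm_apply (e x))
  refine ⟨(innerₗ _).compl₁₂ S S, fun x y => real_inner_comm (S y) (S x), fun x => ?_⟩
  have hB : (innerₗ _).compl₁₂ S S x x = ‖S x‖ ^ 2 := real_inner_self_eq_norm_sq (S x)
  rw [hB]
  constructor
  · have := T.le_of_opNorm_le hT (S x)
    rw [hTS, one_mul] at this
    gcongr
  · simpa [hTS] using norm_sq_le_of_max_det e hT hdet hmax (S x)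
end

section
/- Let (E_i, ‖·‖_i), i = 1,...,m, be κ-smooth finite-dimensional normed spaces, let 2 ≤ ρ < ∞, and equip E = E₁ × ... × E_m with the norm ‖(x¹,...,x^m)‖ = (Σ_i ‖x^i‖_i^ρ)^{1/ρ}. Then (E, ‖·‖) is (κ + ρ − 2)-smooth. -/
open Filter Topology

/-- A differentiable function whose second-order Peano expansions are bounded above by `C`
satisfies the corresponding global quadratic upper bound. -/
theorem le_quadratic_of_eventually_le {f f' : ℝ → ℝ} {C : ℝ}
    (hf : ∀ t, HasDerivAt f (f' t) t)
    (hloc : ∀ t, ∀ ε > 0, ∀ᶠ h in 𝓝 (0 : ℝ), f (t + h) ≤ f t + h * f' t + (C + ε) * h ^ 2) :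
    f 1 ≤ f 0 + f' 0 + C := by
  refine le_of_forall_pos_lt_add fun ε hε => ?_
  by_contra! hcon
  set D := C + ε / 2 with hD
  set α := f 1 - f 0 - D with hα
  set χ : ℝ → ℝ := fun t => f t - α * t - D * t ^ 2 with hχ
  have hderiv : ∀ t, HasDerivAt χ (f' t - α - D * (2 * t)) t := fun t => by
    have h := ((hf t).sub ((hasDerivAt_id t).const_mul α)).sub
      (((hasDerivAt_id t).pow 2).const_mul D)
    refine h.congr_deriv ?_
    simp
  have hcont : ContinuousOn χ (Set.Icc 0 1) := fun t _ =>
    (hderiv t).continuousAt.continuousWithinAt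
  obtain ⟨t₀, ht₀, hmin⟩ := isCompact_Icc.exists_isMinOn (Set.nonempty_Icc.2 zero_le_one) hcont
  have hends : χ 1 = χ 0 := by simp only [hχ, hα]; ring
  obtain ⟨s, hs, hslt⟩ : ∃ s ∈ Set.Icc (0 : ℝ) 1, χ s < χ 0 := by
    have hneg : f' 0 - α - D * (2 * 0) < 0 := by
      rw [hα, hD]; linarith
    have hev := (hasDerivAt_iff_tendsto_slope.1 (hderiv 0)).eventually (gt_mem_nhds hneg)
    have hev' := hev.filter_mono (nhdsWithin_mono (0 : ℝ) (s := Set.Ioi 0)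
      (fun x hx => (ne_of_gt hx : x ≠ 0)))
    obtain ⟨s, hs1, hs2⟩ := (hev'.and (Ioo_mem_nhdsGT (zero_lt_one' ℝ))).exists
    refine ⟨s, ⟨hs2.1.le, hs2.2.le⟩, ?_⟩
    rw [slope_def_field, sub_zero, div_neg_iff] at hs1
    rcases hs1 with h | h
    · linarith [hs2.1]
    · linarith
  have hlt : χ t₀ < χ 0 := (hmin hs).trans_lt hslt
  have hne0 : t₀ ≠ 0 := fun h => by simp [h] at hlt
  have hne1 : t₀ ≠ 1 := fun h => by rw [h, hends] at hlt; exact lt_irrefl _ hlt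
  have hIcc : Set.Icc (0 : ℝ) 1 ∈ 𝓝 t₀ :=
    Icc_mem_nhds (lt_of_le_of_ne ht₀.1 hne0.symm) (lt_of_le_of_ne ht₀.2 hne1)
  have hlocmin : IsLocalMin χ t₀ := hmin.isLocalMin hIcc
  have hzero := hlocmin.hasDerivAt_eq_zero (hderiv t₀)
  have hshift : Tendsto (fun h : ℝ => t₀ + h) (𝓝 0) (𝓝 t₀) := by
    have : ContinuousAt (fun h : ℝ => t₀ + h) 0 := by fun_prop
    simpa [ContinuousAt] using this
  have hboth := (hshift.eventually hlocmin).and (hloc t₀ (ε / 4) (by positivity))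
  obtain ⟨h, ⟨h1, h2⟩, hpos⟩ := ((hboth.filter_mono nhdsWithin_le_nhds).and
    (self_mem_nhdsWithin : Set.Ioi (0 : ℝ) ∈ 𝓝[>] 0)).exists
  have hpos : 0 < h := hpos
  simp only [hχ] at h1
  have hsq : 0 < ε * h ^ 2 := by positivity
  have hf't : f' t₀ = α + D * (2 * t₀) := by linarith
  rw [hf't] at h2
  have : C = D - ε / 2 := by rw [hD]; ring
  rw [this] at h2
  nlinarith

/-- Second-order upper bound for the `r`-th power of a quadratic perturbation of `u`. -/
theorem eventually_rpow_le_quadratic {u l b κ r δ : ℝ} (hu : 0 ≤ u) (hl : l ^ 2 ≤ 4 * u * b)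
    (hb : 0 ≤ b) (hκ : 0 ≤ κ) (hr : 1 ≤ r) (hδ : 0 < δ) :
    ∀ᶠ h in 𝓝 (0 : ℝ), ∀ v, 0 ≤ v → v ≤ u + h * l + κ * h ^ 2 * b →
      v ^ r ≤ u ^ r + r * u ^ (r - 1) * (h * l) +
        (r * u ^ (r - 1) * b * (κ + 2 * (r - 1)) + δ) * h ^ 2 := by
  have hr0 : 0 < r := by linarith
  rcases hr.eq_or_lt with rfl | hr1
  · refine Eventually.of_forall fun h v _ hv => ?_
    simp only [Real.rpow_one, sub_self, Real.rpow_zero]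
    nlinarith [mul_nonneg hδ.le (sq_nonneg h)]
  rcases hu.eq_or_lt with rfl | hu0
  · have hl0 : l = 0 := by nlinarith [sq_nonneg l]
    subst hl0
    have hlim : Tendsto (fun h : ℝ => (κ * b) ^ r * (h ^ 2) ^ (r - 1)) (𝓝 0) (𝓝 0) := by
      have : ContinuousAt (fun h : ℝ => (κ * b) ^ r * (h ^ 2) ^ (r - 1)) 0 :=
        continuousAt_const.mul
          ((continuousAt_id.pow 2).rpow_const (Or.inr (by linarith)))
      have h2 := this.tendsto
      simpa [Real.zero_rpow (by linarith : r - 1 ≠ 0)] using h2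
    filter_upwards [hlim.eventually (gt_mem_nhds hδ)] with h hh v hv hvle
    have hz : (0 : ℝ) ^ (r - 1) = 0 := Real.zero_rpow (by linarith)
    have hz' : (0 : ℝ) ^ r = 0 := Real.zero_rpow (by linarith)
    rw [hz, hz']
    calc v ^ r ≤ ((κ * b) * h ^ 2) ^ r :=
          Real.rpow_le_rpow hv (by linarith) hr0.le
      _ = ((κ * b) ^ r * (h ^ 2) ^ (r - 1)) * h ^ 2 := by
          rw [Real.mul_rpow (by positivity) (by positivity), mul_assoc]
          congr 1
          rcases eq_or_ne (h ^ 2) 0 with h0 | h0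
          · rw [h0, hz', mul_zero]
          · rw [Real.rpow_sub_one h0, div_mul_cancel₀ _ h0]
      _ ≤ δ * h ^ 2 := by gcongr
      _ = _ := by ring
  · set A := r * u ^ (r - 1) * b * (κ + 2 * (r - 1)) with hA
    set G : ℝ → ℝ := fun h => u + h * l + κ * h ^ 2 * b with hG
    have hG0 : G 0 = u := by simp [hG]
    have hGd : ∀ h, HasDerivAt G (l + κ * (2 * h) * b) h := fun h => by
      have := (((hasDerivAt_id h).mul_const l).const_add u).add
        ((((hasDerivAt_id h).pow 2).const_mul κ).mul_const b)
      refine this.congr_deriv ?_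
      simp
    have hGpos : ∀ᶠ h in 𝓝 (0 : ℝ), 0 < G h :=
      (hGd 0).continuousAt.eventually (lt_mem_nhds (by rwa [hG0]))
    set g : ℝ → ℝ := fun h => u ^ r + r * u ^ (r - 1) * (h * l) + (A + δ) * h ^ 2 - G h ^ r
      with hg
    set g' : ℝ → ℝ := fun h => r * u ^ (r - 1) * l + (A + δ) * (2 * h) -
      (l + κ * (2 * h) * b) * r * G h ^ (r - 1) with hg'
    have hgd : ∀ h, HasDerivAt g (g' h) h := fun h => by
      have := ((((hasDerivAt_id h).mul_const l).const_mul (r * u ^ (r - 1))).const_add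
        (u ^ r)).add (((hasDerivAt_id h).pow 2).const_mul (A + δ)) |>.sub
        ((hGd h).rpow_const (p := r) (Or.inr hr))
      refine this.congr_deriv ?_
      simp [hg']
    have hgderiv : deriv g = g' := funext fun h => (hgd h).deriv
    have hg'd : HasDerivAt g' (2 * (A + δ) -
        (2 * κ * b * r * u ^ (r - 1) + l * r * (l * (r - 1) * u ^ (r - 1 - 1)))) 0 := by
      have hlin : HasDerivAt (fun h : ℝ => (l + κ * (2 * h) * b) * r) (2 * κ * b * r) 0 := by
        have := ((((((hasDerivAt_id (0 : ℝ)).const_mul 2).const_mul κ).mul_const b).const_add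
          l).mul_const r)
        refine this.congr_deriv ?_
        ring
      have hpow := (hGd 0).rpow_const (p := r - 1) (Or.inl (by rw [hG0]; exact hu0.ne'))
      have := ((((hasDerivAt_id (0 : ℝ)).const_mul 2).const_mul (A + δ)).const_add
        (r * u ^ (r - 1) * l)).sub (hlin.mul hpow)
      refine this.congr_deriv ?_
      rw [hG0]
      ring
    have hpos : 0 < deriv (deriv g) 0 := by
      rw [hgderiv, hg'd.deriv, hA]
      have hur : u ^ (r - 1) = u ^ (r - 1 - 1) * u := by
        rw [Real.rpow_sub_one hu0.ne' (r - 1), div_mul_cancel₀ _ hu0.ne']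
      have hw : 0 < u ^ (r - 1 - 1) := Real.rpow_pos_of_pos hu0 _
      rw [hur]
      have hk : 0 ≤ r * (r - 1) * u ^ (r - 1 - 1) := by
        have : 0 ≤ r - 1 := by linarith
        positivity
      nlinarith [mul_le_mul_of_nonneg_left hl hk]
    have hzero : deriv g 0 = 0 := by
      rw [hgderiv]; simp only [hg', hG0]; ring
    have hmin := isLocalMin_of_deriv_deriv_pos hpos hzero (hgd 0).continuousAt
    filter_upwards [hmin] with h hh v hv hvle
    have h0 : g 0 = 0 := by simp [hg, hG0]
    rw [h0] at hh
    have hmono : v ^ r ≤ G h ^ r := Real.rpow_le_rpow hv hvle hr0.le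
    simp only [hg] at hh
    linarith

/-- Hölder's inequality for weights `u i ^ (r - 1)`. -/
theorem sum_rpow_sub_one_mul_le {ι : Type*} [Fintype ι] {u b : ι → ℝ} {r : ℝ}
    (hu : ∀ i, 0 ≤ u i) (hb : ∀ i, 0 ≤ b i) (hr : 1 ≤ r) :
    ∑ i, u i ^ (r - 1) * b i ≤
      (∑ i, u i ^ r) ^ (1 - 1 / r) * (∑ i, b i ^ r) ^ (1 / r) := by
  rcases hr.eq_or_lt with rfl | hr1
  · simp
  have hconj := (Real.HolderConjugate.conjExponent hr1).symm
  have h := Real.inner_le_Lp_mul_Lq_of_nonneg Finset.univ hconj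
    (f := fun i => u i ^ (r - 1)) (g := b)
    (fun i _ => Real.rpow_nonneg (hu i) _) (fun i _ => hb i)
  have hr1' : r - 1 ≠ 0 := by linarith
  have hr0 : r ≠ 0 := by linarith
  have he : ∀ i, (u i ^ (r - 1)) ^ (Real.conjExponent r) = u i ^ r := fun i => by
    rw [← Real.rpow_mul (hu i), Real.conjExponent]
    congr 1
    field_simp
  have he' : 1 / Real.conjExponent r = 1 - 1 / r := by
    rw [Real.conjExponent]; field_simp
  simpa only [he, he'] using h

theorem rpow_le_tangent {s t θ : ℝ} (hs : 0 < s) (ht : 0 ≤ t) (h0 : 0 ≤ θ) (h1 : θ ≤ 1) :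
    t ^ θ ≤ s ^ θ + θ * s ^ (θ - 1) * (t - s) := by
  have h := rpow_one_add_le_one_add_mul_self (s := (t - s) / s) (p := θ)
    (by rw [le_div_iff₀ hs]; linarith) h0 h1
  have he : 1 + (t - s) / s = t / s := by field_simp; ring
  rw [he, Real.div_rpow ht hs.le, div_le_iff₀ (Real.rpow_pos_of_pos hs _)] at h
  rw [Real.rpow_sub_one hs.ne']
  refine h.trans_eq ?_
  field_simp

/-- The derivative of the squared norm of a `κ`-smooth space is bounded by `2 ‖x‖`. -/
theorem abs_le_two_mul_norm_of_smooth {F : Type*} [NormedAddCommGroup F] [NormedSpace ℝ F]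
    {κ : ℝ} {x : F} {L : F →L[ℝ] ℝ}
    (h : ∀ y, ‖x + y‖ ^ 2 ≤ ‖x‖ ^ 2 + L y + κ * ‖y‖ ^ 2) (y : F) :
    |L y| ≤ 2 * ‖x‖ * ‖y‖ := by
  have key : ∀ z : F, -(2 * ‖x‖ * ‖z‖) ≤ L z := fun z => by
    have hlim : Tendsto (fun t : ℝ => L z + κ * t * ‖z‖ ^ 2) (𝓝[>] 0) (𝓝 (L z)) := by
      have : ContinuousAt (fun t : ℝ => L z + κ * t * ‖z‖ ^ 2) 0 := by fun_prop
      have := this.tendsto.mono_left (nhdsWithin_le_nhds (s := Set.Ioi (0 : ℝ)))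
      simpa using this
    refine ge_of_tendsto hlim ?_
    filter_upwards [self_mem_nhdsWithin] with t ht
    have ht : 0 < t := ht
    have h1 := h (t • z)
    have h2 : ‖x‖ - t * ‖z‖ ≤ ‖x + t • z‖ := by
      have := norm_sub_norm_le x (-(t • z))
      rwa [sub_neg_eq_add, norm_neg, norm_smul, Real.norm_of_nonneg ht.le] at this
    have h4 : ‖x‖ ^ 2 - 2 * t * ‖x‖ * ‖z‖ ≤ ‖x + t • z‖ ^ 2 := by
      nlinarith [sq_nonneg (‖x + t • z‖ - ‖x‖), mul_nonneg (norm_nonneg x) (sub_nonneg.2 h2)]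
    rw [map_smul, norm_smul, Real.norm_of_nonneg ht.le, smul_eq_mul] at h1
    have h5 : t * -(2 * ‖x‖ * ‖z‖) ≤ t * (L z + κ * t * ‖z‖ ^ 2) := by nlinarith
    exact le_of_mul_le_mul_left h5 ht
  have h1 := key y
  have h2 := key (-y)
  rw [norm_neg, map_neg] at h2
  exact abs_le.2 ⟨h1, by linarith⟩

section ProductNorm

variable {ι : Type*} [Fintype ι] {E : ι → Type*} [∀ i, NormedAddCommGroup (E i)]

/-- The sum of the `r`-th powers of the squared norms of the components. -/
noncomputable def sqNormPowSum (r : ℝ) (x : ∀ i, E i) : ℝ := ∑ i, (‖x i‖ ^ 2) ^ r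

theorem sqNormPowSum_nonneg (r : ℝ) (x : ∀ i, E i) : 0 ≤ sqNormPowSum r x :=
  Finset.sum_nonneg fun _ _ => Real.rpow_nonneg (sq_nonneg _) _

theorem eq_zero_of_sqNormPowSum_eq_zero {r : ℝ} {x : ∀ i, E i}
    (h : sqNormPowSum r x = 0) : x = 0 := by
  funext i
  have hi := (Finset.sum_eq_zero_iff_of_nonneg
    (fun i _ => Real.rpow_nonneg (sq_nonneg ‖x i‖) r)).1 h i (Finset.mem_univ i)
  have := ((Real.rpow_eq_zero_iff_of_nonneg (sq_nonneg _)).1 hi).1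
  simpa using this

theorem sq_norm_rpow_le_sqNormPowSum {r : ℝ} (x : ∀ i, E i) (i : ι) :
    (‖x i‖ ^ 2) ^ r ≤ sqNormPowSum r x :=
  Finset.single_le_sum (f := fun i => (‖x i‖ ^ 2) ^ r)
    (fun _ _ => Real.rpow_nonneg (sq_nonneg _) _) (Finset.mem_univ i)

theorem sqNormDeriv_weight_le_one {r : ℝ} (hr : 1 ≤ r) {x : ∀ i, E i}
    (hx : 0 < sqNormPowSum r x) (i : ι) :
    sqNormPowSum r x ^ (1 / r - 1) * (‖x i‖ ^ 2) ^ (r - 1) ≤ 1 := by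
  have hr0 : 0 < r := by linarith
  have h1 : (‖x i‖ ^ 2) ^ (r - 1) ≤ sqNormPowSum r x ^ (1 - 1 / r) := by
    have h := Real.rpow_le_rpow (Real.rpow_nonneg (sq_nonneg _) _)
      (sq_norm_rpow_le_sqNormPowSum (r := r) x i)
      (sub_nonneg.2 ((div_le_one hr0).2 hr) : 0 ≤ 1 - 1 / r)
    rwa [← Real.rpow_mul (sq_nonneg _), mul_sub, mul_one, mul_one_div_cancel hr0.ne'] at h
  calc _ ≤ sqNormPowSum r x ^ (1 / r - 1) * sqNormPowSum r x ^ (1 - 1 / r) := by gcongr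
    _ = 1 := by rw [← Real.rpow_add hx]; simp

variable [∀ i, NormedSpace ℝ (E i)]

/-- The derivative of `x ↦ sqNormPowSum r x ^ (1 / r)`. -/
noncomputable def sqNormDeriv (r : ℝ) (x : ∀ i, E i) : (∀ i, E i) →L[ℝ] ℝ :=
  ∑ i, (sqNormPowSum r x ^ (1 / r - 1) * (‖x i‖ ^ 2) ^ (r - 1)) •
    (fderiv ℝ (fun z : E i => ‖z‖ ^ 2) (x i)).comp (ContinuousLinearMap.proj i)

theorem sqNormPowSum_smul_rpow {r : ℝ} (hr : 1 ≤ r) (t : ℝ) (y : ∀ i, E i) :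
    sqNormPowSum r (t • y) ^ (1 / r) = t ^ 2 * sqNormPowSum r y ^ (1 / r) := by
  have hr0 : r ≠ 0 := by linarith
  have h : sqNormPowSum r (t • y) = (t ^ 2) ^ r * sqNormPowSum r y := by
    simp only [sqNormPowSum, Finset.mul_sum]
    refine Finset.sum_congr rfl fun i _ => ?_
    rw [Pi.smul_apply, norm_smul, mul_pow, Real.mul_rpow (by positivity) (by positivity),
      Real.norm_eq_abs, sq_abs]
  rw [h, Real.mul_rpow (by positivity) (sqNormPowSum_nonneg _ _), ← Real.rpow_mul (by positivity),
    mul_one_div_cancel hr0, Real.rpow_one]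

theorem sqNormDeriv_apply (r : ℝ) (x y : ∀ i, E i) :
    sqNormDeriv r x y = sqNormPowSum r x ^ (1 / r - 1) *
      ∑ i, (‖x i‖ ^ 2) ^ (r - 1) * fderiv ℝ (fun z : E i => ‖z‖ ^ 2) (x i) (y i) := by
  simp [sqNormDeriv, Finset.mul_sum, mul_assoc]

theorem sqNormDeriv_zero {r : ℝ}
    (hbound : ∀ i (x y : E i), |fderiv ℝ (fun z : E i => ‖z‖ ^ 2) x y| ≤ 2 * ‖x‖ * ‖y‖) :
    sqNormDeriv r (0 : ∀ i, E i) = 0 := by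
  ext y
  rw [sqNormDeriv_apply, Finset.sum_eq_zero, mul_zero, _root_.zero_apply]
  intro i _
  have h := hbound i 0 (y i)
  rw [norm_zero, mul_zero, zero_mul] at h
  rw [Pi.zero_apply, abs_nonpos_iff.1 h, mul_zero]

theorem hasFDerivAt_sqNormPowSum_rpow {r : ℝ} (hr : 1 ≤ r)
    (hdiff : ∀ i, Differentiable ℝ (fun z : E i => ‖z‖ ^ 2))
    (hbound : ∀ i (x y : E i), |fderiv ℝ (fun z : E i => ‖z‖ ^ 2) x y| ≤ 2 * ‖x‖ * ‖y‖)
    (x : ∀ i, E i) :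
    HasFDerivAt (fun x : ∀ i, E i => sqNormPowSum r x ^ (1 / r)) (sqNormDeriv r x) x := by
  have hr0 : 0 < r := by linarith
  rcases (sqNormPowSum_nonneg r x).eq_or_lt with hS | hS
  · obtain rfl := eq_zero_of_sqNormPowSum_eq_zero hS.symm
    rw [sqNormDeriv_zero hbound]
    refine Asymptotics.IsBigO.hasFDerivAt (n := 2) ?_ one_lt_two
    refine Asymptotics.IsBigO.of_bound ((Fintype.card ι : ℝ) ^ (1 / r)) (Eventually.of_forall ?_)
    intro z
    have hle : sqNormPowSum r z ≤ Fintype.card ι * (‖z‖ ^ 2) ^ r := by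
      calc sqNormPowSum r z ≤ ∑ _i : ι, (‖z‖ ^ 2) ^ r := by
            refine Finset.sum_le_sum fun i _ => ?_
            gcongr
            exact norm_le_pi_norm z i
        _ = _ := by simp
    rw [Real.norm_of_nonneg (Real.rpow_nonneg (sqNormPowSum_nonneg _ _) _), sub_zero,
      Real.norm_of_nonneg (by positivity)]
    calc sqNormPowSum r z ^ (1 / r) ≤ (Fintype.card ι * (‖z‖ ^ 2) ^ r) ^ (1 / r) :=
          Real.rpow_le_rpow (sqNormPowSum_nonneg _ _) hle (by positivity)
      _ = _ := by
          rw [Real.mul_rpow (by positivity) (by positivity), ← Real.rpow_mul (by positivity),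
            mul_one_div_cancel hr0.ne', Real.rpow_one]
  · have hcomp : ∀ i, HasFDerivAt (fun z : ∀ i, E i => (‖z i‖ ^ 2) ^ r)
        ((r * (‖x i‖ ^ 2) ^ (r - 1)) • (fderiv ℝ (fun z : E i => ‖z‖ ^ 2) (x i)).comp
          (ContinuousLinearMap.proj i)) x := fun i =>
      HasFDerivAt.rpow_const (f := fun z : ∀ i, E i => ‖z i‖ ^ 2)
        (HasFDerivAt.comp (g := fun z : E i => ‖z‖ ^ 2) (f := fun z : ∀ i, E i => z i) x
          (hdiff i (x i)).hasFDerivAt (hasFDerivAt_apply i x)) (Or.inr hr)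
    have hsum := HasFDerivAt.fun_sum (u := Finset.univ) fun i _ => hcomp i
    refine (hsum.rpow_const (p := 1 / r) (Or.inl hS.ne')).congr_fderiv ?_
    rw [sqNormDeriv, Finset.smul_sum]
    refine Finset.sum_congr rfl fun i _ => ?_
    rw [smul_smul]
    congr 1
    change 1 / r * sqNormPowSum r x ^ (1 / r - 1) * (r * (‖x i‖ ^ 2) ^ (r - 1)) = _
    field_simp

theorem continuous_sqNormDeriv {r : ℝ} (hr : 1 ≤ r)
    (hcont : ∀ i, Continuous (fderiv ℝ (fun z : E i => ‖z‖ ^ 2)))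
    (hbound : ∀ i (x y : E i), |fderiv ℝ (fun z : E i => ‖z‖ ^ 2) x y| ≤ 2 * ‖x‖ * ‖y‖) :
    Continuous (sqNormDeriv r : (∀ i, E i) → _) := by
  have hr0 : 0 < r := by linarith
  have hnorm : ∀ i : ι, Continuous fun z : ∀ i, E i => ‖z i‖ ^ 2 := fun i => by fun_prop
  refine continuous_iff_continuousAt.2 fun x => ?_
  rcases (sqNormPowSum_nonneg r x).eq_or_lt with hS | hS
  · obtain rfl := eq_zero_of_sqNormPowSum_eq_zero hS.symm
    rw [ContinuousAt, sqNormDeriv_zero hbound]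
    have hlim : Tendsto (fun z : ∀ i, E i => ∑ i, 2 * ‖z i‖) (𝓝 0) (𝓝 0) := by
      have : Continuous fun z : ∀ i, E i => ∑ i, 2 * ‖z i‖ := by fun_prop
      simpa using this.tendsto 0
    refine squeeze_zero_norm (fun z => ?_) hlim
    refine ContinuousLinearMap.opNorm_le_bound _ (by positivity) fun y => ?_
    rcases (sqNormPowSum_nonneg r z).eq_or_lt with hz | hz
    · obtain rfl := eq_zero_of_sqNormPowSum_eq_zero hz.symm
      rw [sqNormDeriv_zero hbound, _root_.zero_apply, norm_zero]
      positivity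
    rw [sqNormDeriv_apply, Finset.mul_sum, Finset.sum_mul]
    refine norm_sum_le_of_le _ fun i _ => ?_
    have hw : 0 ≤ sqNormPowSum r z ^ (1 / r - 1) * (‖z i‖ ^ 2) ^ (r - 1) := by positivity
    rw [← mul_assoc, norm_mul, Real.norm_of_nonneg hw, Real.norm_eq_abs]
    calc _ ≤ 1 * (2 * ‖z i‖ * ‖y i‖) :=
          mul_le_mul (sqNormDeriv_weight_le_one hr hz i) (hbound i _ _) (abs_nonneg _) zero_le_one
      _ ≤ 2 * ‖z i‖ * ‖y‖ := by
          rw [one_mul]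
          gcongr
          exact norm_le_pi_norm y i
  · have hScont : ContinuousAt (sqNormPowSum r : (∀ i, E i) → ℝ) x :=
      (continuous_finsetSum _ fun i _ =>
        (hnorm i).rpow_const fun _ => Or.inr hr0.le).continuousAt
    refine tendsto_finsetSum _ fun i _ => ?_
    refine Tendsto.smul ((hScont.rpow_const (Or.inl hS.ne')).mul
      ((hnorm i).continuousAt.rpow_const (Or.inr (by linarith)))) ?_
    exact (((hcont i).comp (continuous_apply i)).clm_comp continuous_const).tendsto x

/-- Second-order upper expansion of `sqNormPowSum r · ^ (1 / r)` along a line. -/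
theorem eventually_sqNormPowSum_rpow_le {κ r : ℝ} (hκ : 1 ≤ κ) (hr : 1 ≤ r)
    (hsm : ∀ i (x y : E i), ‖x + y‖ ^ 2 ≤
      ‖x‖ ^ 2 + fderiv ℝ (fun z : E i => ‖z‖ ^ 2) x y + κ * ‖y‖ ^ 2)
    (hbound : ∀ i (x y : E i), |fderiv ℝ (fun z : E i => ‖z‖ ^ 2) x y| ≤ 2 * ‖x‖ * ‖y‖)
    (x y : ∀ i, E i) {ε : ℝ} (hε : 0 < ε) :
    ∀ᶠ h in 𝓝 (0 : ℝ), sqNormPowSum r (x + h • y) ^ (1 / r) ≤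
      sqNormPowSum r x ^ (1 / r) + h * sqNormDeriv r x y +
        ((κ + 2 * (r - 1)) * sqNormPowSum r y ^ (1 / r) + ε) * h ^ 2 := by
  have hr0 : 0 < r := by linarith
  have hK : 1 ≤ κ + 2 * (r - 1) := by linarith
  rcases (sqNormPowSum_nonneg r x).eq_or_lt with hS | hS
  · obtain rfl := eq_zero_of_sqNormPowSum_eq_zero hS.symm
    refine Eventually.of_forall fun h => ?_
    rw [zero_add, sqNormPowSum_smul_rpow hr, sqNormDeriv_zero hbound, ← hS,
      Real.zero_rpow (by positivity), _root_.zero_apply]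
    have hB : 0 ≤ sqNormPowSum r y ^ (1 / r) := Real.rpow_nonneg (sqNormPowSum_nonneg _ _) _
    nlinarith [mul_nonneg (mul_nonneg (sub_nonneg.2 hK) hB) (sq_nonneg h),
      mul_nonneg hε.le (sq_nonneg h)]
  · set S := sqNormPowSum r x with hSdef
    set B := sqNormPowSum r y ^ (1 / r) with hB
    set c := S ^ (1 / r - 1) with hc
    have hc0 : 0 < c := Real.rpow_pos_of_pos hS _
    set l : ι → ℝ := fun i => fderiv ℝ (fun z : E i => ‖z‖ ^ 2) (x i) (y i) with hl
    set w : ι → ℝ := fun i => (‖x i‖ ^ 2) ^ (r - 1) with hw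
    set N : ℝ := (Fintype.card ι : ℝ) with hN
    have hN0 : 0 ≤ N := Nat.cast_nonneg _
    set δ := ε * r / (c * (N + 1)) with hδ
    have hδ0 : 0 < δ := by positivity
    have hall : ∀ᶠ h in 𝓝 (0 : ℝ), ∀ i, (‖x i + h • y i‖ ^ 2) ^ r ≤
        (‖x i‖ ^ 2) ^ r + r * w i * (h * l i) +
          (r * w i * ‖y i‖ ^ 2 * (κ + 2 * (r - 1)) + δ) * h ^ 2 := by
      refine eventually_all.2 fun i => ?_
      have hli : l i ^ 2 ≤ 4 * ‖x i‖ ^ 2 * ‖y i‖ ^ 2 := by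
        have := sq_le_sq' (neg_le_of_abs_le (hbound i (x i) (y i)))
          (le_of_abs_le (hbound i (x i) (y i)))
        refine this.trans_eq ?_
        ring
      filter_upwards [eventually_rpow_le_quadratic (κ := κ) (sq_nonneg ‖x i‖) hli
        (sq_nonneg ‖y i‖) (by linarith) hr hδ0] with h hh
      refine hh _ (sq_nonneg _) ?_
      have := hsm i (x i) (h • y i)
      rw [map_smul, norm_smul, smul_eq_mul, mul_pow, Real.norm_eq_abs, sq_abs] at this
      linarith
    filter_upwards [hall] with h hh
    have hsum : sqNormPowSum r (x + h • y) ≤ S + r * h * ∑ i, w i * l i +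
        (r * (κ + 2 * (r - 1)) * ∑ i, w i * ‖y i‖ ^ 2) * h ^ 2 + N * δ * h ^ 2 := by
      refine (Finset.sum_le_sum fun i _ => hh i).trans_eq ?_
      have hconst : N * δ * h ^ 2 = ∑ _i : ι, δ * h ^ 2 := by simp [hN, mul_assoc]
      simp only [hconst, hSdef, sqNormPowSum, Finset.mul_sum, Finset.sum_mul,
        ← Finset.sum_add_distrib]
      exact Finset.sum_congr rfl fun i _ => by ring
    have hholder : c * ∑ i, w i * ‖y i‖ ^ 2 ≤ B := by
      have := sum_rpow_sub_one_mul_le (u := fun i => ‖x i‖ ^ 2) (b := fun i => ‖y i‖ ^ 2)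
        (fun i => sq_nonneg _) (fun i => sq_nonneg _) hr
      calc c * ∑ i, w i * ‖y i‖ ^ 2 ≤ c * (S ^ (1 - 1 / r) * B) :=
            mul_le_mul_of_nonneg_left this hc0.le
        _ = B := by rw [← mul_assoc, hc, ← Real.rpow_add hS]; simp
    have htan := rpow_le_tangent (θ := 1 / r) hS (sqNormPowSum_nonneg r (x + h • y))
      (by positivity) ((div_le_one hr0).2 hr)
    have hδle : 1 / r * c * (N * δ) ≤ ε := by
      have : 1 / r * c * (N * δ) = ε * (N / (N + 1)) := by
        rw [hδ]; field_simp
      rw [this]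
      exact mul_le_of_le_one_right hε.le ((div_le_one (by positivity)).2 (by linarith))
    rw [sqNormDeriv_apply]
    change _ ≤ S ^ (1 / r) + h * (c * ∑ i, w i * l i) + _
    calc sqNormPowSum r (x + h • y) ^ (1 / r)
        ≤ S ^ (1 / r) + 1 / r * c * (sqNormPowSum r (x + h • y) - S) := htan
      _ ≤ S ^ (1 / r) + 1 / r * c * (r * h * ∑ i, w i * l i +
          (r * (κ + 2 * (r - 1)) * ∑ i, w i * ‖y i‖ ^ 2) * h ^ 2 + N * δ * h ^ 2) := by
          gcongr
          linarith
      _ = S ^ (1 / r) + h * (c * ∑ i, w i * l i) +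
          ((κ + 2 * (r - 1)) * (c * ∑ i, w i * ‖y i‖ ^ 2) + 1 / r * c * (N * δ)) * h ^ 2 := by
          field_simp
          ring
      _ ≤ _ := by gcongr

end ProductNorm

theorem product_rho_norm_smooth {m : ℕ} (E : Fin m → Type*)
    [∀ i, NormedAddCommGroup (E i)] [∀ i, NormedSpace ℝ (E i)]
    (κ ρ : ℝ) (hκ : 1 ≤ κ) (hρ : 2 ≤ ρ)
    (hsm : ∀ i, ContDiff ℝ 1 (fun x : E i => ‖x‖ ^ 2) ∧
      ∀ x y : E i, ‖x + y‖ ^ 2 ≤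
        ‖x‖ ^ 2 + fderiv ℝ (fun z : E i => ‖z‖ ^ 2) x y + κ * ‖y‖ ^ 2)
    (p : (∀ i, E i) → ℝ)
    (hp : p = fun x => ((∑ i, ‖x i‖ ^ ρ) ^ (1 / ρ)) ^ 2) :
    ContDiff ℝ 1 p ∧
      ∀ x y : ∀ i, E i, p (x + y) ≤ p x + fderiv ℝ p x y + (κ + ρ - 2) * p y := by
  have hr : 1 ≤ ρ / 2 := by linarith
  have hpr : p = fun x => sqNormPowSum (ρ / 2) x ^ (1 / (ρ / 2)) := by
    rw [hp]
    funext x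
    have hterm : ∀ i, ‖x i‖ ^ ρ = (‖x i‖ ^ 2) ^ (ρ / 2) := fun i => by
      rw [← Real.rpow_natCast, ← Real.rpow_mul (norm_nonneg _)]
      congr 1
      push_cast
      ring
    simp only [hterm]
    change (sqNormPowSum (ρ / 2) x ^ (1 / ρ)) ^ 2 = _
    rw [← Real.rpow_natCast, ← Real.rpow_mul (sqNormPowSum_nonneg _ _)]
    congr 1
    push_cast
    field_simp
  have hbound : ∀ i (x y : E i),
      |fderiv ℝ (fun z : E i => ‖z‖ ^ 2) x y| ≤ 2 * ‖x‖ * ‖y‖ := fun i x =>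
    abs_le_two_mul_norm_of_smooth ((hsm i).2 x)
  have hderiv : ∀ x, HasFDerivAt p (sqNormDeriv (ρ / 2) x) x := fun x => by
    rw [hpr]
    exact hasFDerivAt_sqNormPowSum_rpow hr (fun i => (hsm i).1.differentiable one_ne_zero)
      hbound x
  refine ⟨contDiff_one_iff_hasFDerivAt.2 ⟨_, continuous_sqNormDeriv hr
    (fun i => (hsm i).1.continuous_fderiv one_ne_zero) hbound, hderiv⟩, fun x y => ?_⟩
  have hline : ∀ t : ℝ, HasDerivAt (fun t : ℝ => p (x + t • y))
      (sqNormDeriv (ρ / 2) (x + t • y) y) t := fun t => by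
    have hd : HasDerivAt (fun t : ℝ => x + t • y) y t := by
      simpa using ((hasDerivAt_id t).smul_const y).const_add x
    exact (hderiv (x + t • y)).comp_hasDerivAt t hd
  have hmain := le_quadratic_of_eventually_le (C := (κ + ρ - 2) * p y) hline fun t ε hε => by
    have h := eventually_sqNormPowSum_rpow_le hκ hr (fun i => (hsm i).2) hbound (x + t • y) y hε
    filter_upwards [h] with s hs
    have hC : (κ + ρ - 2) * p y =
        (κ + 2 * (ρ / 2 - 1)) * sqNormPowSum (ρ / 2) y ^ (1 / (ρ / 2)) := by
      rw [hpr]; ring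
    rw [hC, add_smul, ← add_assoc, hpr]
    exact hs
  simpa [(hderiv x).fderiv] using hmain
end
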